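/- arXiv:1704.01043 — 2 statements merged into one kernel-verified Lean document; each statement's English description precedes it below -/
import Mathlib

section
/- Assume conditions SYM and BAL hold. Then the operator Ξ is self-adjoint, Ξ(𝟙⊗𝟙) = 𝟙⊗𝟙, and for every x ∈ ℝ^Ω one has Ξ(x⊗𝟙) = (Φx)⊗𝟙 and Ξ(𝟙⊗x) = 𝟙⊗(Φx). Moreover, for every x ∈ ℝ^Ω with ⟨x,𝟙⟩ = 0 one has ⟨Ξ(x⊗𝟙), x⊗𝟙⟩ ≤ 0 and ⟨Ξ(𝟙⊗x), 𝟙⊗x⟩ ≤ 0. Finally, Ξℰ ⊆ ℰ and Ξℰ' ⊆ ℰ'. -/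
open MeasureTheory Matrix Finset

/-- The space of weight functions on `k`-tuples of spins from `Ω`. -/
abbrev WF (Ω : Type*) (k : ℕ) := (Fin k → Ω) → ℝ

/-- `ξ = q^{-k} Σ_σ E[ψ(σ)]`. -/
noncomputable def xiP {Ω : Type*} [Fintype Ω] {k : ℕ} (P : Measure (WF Ω k)) : ℝ :=
  (∑ σ : Fin k → Ω, ∫ ψ, ψ σ ∂P) / (Fintype.card Ω : ℝ) ^ k

/-- The matrix `Φ_ψ(ω,ω') = q^{1-k} ξ^{-1} Σ_τ 1{τ_1=ω, τ_2=ω'} ψ(τ)`. -/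
noncomputable def PhiMat {Ω : Type*} [Fintype Ω] [DecidableEq Ω] {k : ℕ} [NeZero k]
    (ξ : ℝ) (ψ : WF Ω k) : Matrix Ω Ω ℝ :=
  fun ω ω' => ((Fintype.card Ω : ℝ) ^ (k - 1) * ξ)⁻¹ *
    ∑ τ : Fin k → Ω, if τ 0 = ω ∧ τ 1 = ω' then ψ τ else 0

/-- The averaged matrix `Φ = E[Φ_ψ]`. -/
noncomputable def PhiAvg {Ω : Type*} [Fintype Ω] [DecidableEq Ω] {k : ℕ} [NeZero k]
    (ξ : ℝ) (P : Measure (WF Ω k)) : Matrix Ω Ω ℝ :=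
  fun ω ω' => ∫ ψ, PhiMat ξ ψ ω ω' ∂P

/-- The operator `Ξ = E[Φ_ψ ⊗ Φ_ψ]` on `ℝ^Ω ⊗ ℝ^Ω ≅ ℝ^{Ω×Ω}`. -/
noncomputable def XiMat {Ω : Type*} [Fintype Ω] [DecidableEq Ω] {k : ℕ} [NeZero k]
    (ξ : ℝ) (P : Measure (WF Ω k)) : Matrix (Ω × Ω) (Ω × Ω) ℝ :=
  fun p r => ∫ ψ, PhiMat ξ ψ p.1 r.1 * PhiMat ξ ψ p.2 r.2 ∂P

/-- Condition SYM, pointwise part. -/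
def SYMpt {Ω : Type*} [Fintype Ω] [DecidableEq Ω] {k : ℕ} (Ψ : Set (WF Ω k)) (ξ : ℝ) : Prop :=
  ∀ ψ ∈ Ψ, ∀ i : Fin k, ∀ ω : Ω,
    (∑ τ : Fin k → Ω, if τ i = ω then ψ τ else 0) = (Fintype.card Ω : ℝ) ^ (k - 1) * ξ

/-- Condition SYM, distributional part. -/
def SYMperm {Ω : Type*} [Fintype Ω] {k : ℕ} (P : Measure (WF Ω k)) : Prop :=
  ∀ θ : Equiv.Perm (Fin k),
    P.map (fun ψ : WF Ω k => fun σ : Fin k → Ω => ψ (σ ∘ θ)) = P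

/-- The function `φ(μ) = Σ_τ E[ψ(τ)] Π_i μ(τ_i)`. -/
noncomputable def phiFun {Ω : Type*} [Fintype Ω] {k : ℕ} (P : Measure (WF Ω k)) :
    (Ω → ℝ) → ℝ :=
  fun μ => ∑ τ : Fin k → Ω, (∫ ψ, ψ τ ∂P) * ∏ i, μ (τ i)

/-- Condition BAL. -/
def BAL {Ω : Type*} [Fintype Ω] {k : ℕ} (P : Measure (WF Ω k)) : Prop :=
  ConcaveOn ℝ (stdSimplex ℝ Ω) (phiFun P) ∧
    ∀ μ ∈ stdSimplex ℝ Ω, phiFun P μ ≤ phiFun P (fun _ => (Fintype.card Ω : ℝ)⁻¹)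

/-- The subspace `ℰ = {z : ⟨z, 𝟙⊗y⟩ = ⟨z, y⊗𝟙⟩ = 0 for all y}`. -/
def Ecal (Ω : Type*) [Fintype Ω] : Set (Ω × Ω → ℝ) :=
  {z | ∀ y : Ω → ℝ, (z ⬝ᵥ fun p => y p.2) = 0 ∧ (z ⬝ᵥ fun p => y p.1) = 0}

/-- The subspace `ℰ' = {z : ⟨z, 𝟙⊗𝟙⟩ = 0}`. -/
def Ecal' (Ω : Type*) [Fintype Ω] : Set (Ω × Ω → ℝ) :=
  {z | (z ⬝ᵥ fun _ => (1 : ℝ)) = 0}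

/-! Almost surely `Φ_ψ 𝟙 = 𝟙`, so applying `Ξ = E[Φ_ψ ⊗ Φ_ψ]` to a vector with a constant tensor
factor applies `Φ` to the other factor. Exchanging the first two coordinates of `ψ` transposes
`Φ_ψ`, so `Ξ` is symmetric and the invariance of `ℰ` and `ℰ'` follows by duality.
For the sign, restrict `φ` to the line `t ↦ ρ̄ + t x` with `x ⊥ 𝟙`. This restriction has a two-sided
local maximum at `0`, and by exchangeability its second-order coefficient is a positive multiple
of `⟨Φ x, x⟩`. -/

section SecondOrder

open Polynomial Topology Filter

lemma deriv_deriv_nonpos_of_isLocalMax {f : ℝ → ℝ} {a : ℝ} (hf : IsLocalMax f a)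
    (hc : ContinuousAt f a) : deriv (deriv f) a ≤ 0 := by
  by_contra! hpos
  have hmin : IsLocalMin f a := isLocalMin_of_deriv_deriv_pos hpos hf.deriv_eq_zero hc
  have hconst : f =ᶠ[𝓝 a] fun _ => f a := by
    filter_upwards [hf, hmin] with t hle hge using le_antisymm hle hge
  have hzero : deriv (deriv f) a = 0 := by simp [hconst.deriv.deriv_eq]
  exact hpos.ne' hzero

lemma coeff_two_nonpos_of_isLocalMax {p : ℝ[X]} (hp : IsLocalMax (fun t => p.eval t) 0) :
    p.coeff 2 ≤ 0 := by
  have hderiv : deriv (deriv fun t => p.eval t) 0 = 2 * p.coeff 2 := by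
    have hfun : deriv (fun t => p.eval t) = fun t => p.derivative.eval t :=
      funext fun _ => p.deriv
    rw [hfun, Polynomial.deriv, ← coeff_zero_eq_eval_zero, coeff_derivative, coeff_derivative]
    norm_num [mul_comm]
  have := deriv_deriv_nonpos_of_isLocalMax hp p.continuous.continuousAt
  linarith

lemma coeff_prod_C_mul_X_add_C {R ι : Type*} [CommSemiring R] [Fintype ι]
    (x : ι → R) (a : R) (n : ℕ) :
    (∏ i, (C (x i) * X + C a)).coeff n =
      a ^ (Fintype.card ι - n) * ∑ S ∈ powersetCard n univ, ∏ i ∈ S, x i := by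
  classical
  have hterm (S : Finset ι) : (∏ i ∈ S, C (x i) * X) * ∏ _i ∈ Sᶜ, C a =
      C ((∏ i ∈ S, x i) * a ^ (Fintype.card ι - #S)) * X ^ #S := by
    rw [prod_mul_distrib, prod_const, prod_const, card_compl, C_mul, map_prod, map_pow]
    ring
  simp_rw [Fintype.prod_add, hterm, finsetSum_coeff, coeff_C_mul_X_pow]
  rw [← sum_filter, mul_sum]
  refine sum_congr (by ext S; simp [eq_comm]) fun S hS => ?_
  rw [(mem_powersetCard.1 hS).2, mul_comm]

lemma tendsto_line_nhdsWithin_stdSimplex {Ω : Type*} [Fintype Ω] {ν x : Ω → ℝ}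
    (hν : ν ∈ stdSimplex ℝ Ω) (hpos : ∀ ω, 0 < ν ω) (hx : ∑ ω, x ω = 0) :
    Tendsto (fun t : ℝ => fun ω => t * x ω + ν ω) (𝓝 0) (𝓝[stdSimplex ℝ Ω] ν) := by
  have hcont : Continuous fun t : ℝ => fun ω => t * x ω + ν ω := by fun_prop
  have hlim : Tendsto (fun t : ℝ => fun ω => t * x ω + ν ω) (𝓝 0) (𝓝 ν) := by
    simpa using hcont.tendsto 0
  refine tendsto_nhdsWithin_iff.2 ⟨hlim, ?_⟩
  have hnonneg : ∀ᶠ t : ℝ in 𝓝 0, ∀ ω, 0 < t * x ω + ν ω :=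
    eventually_all.2 fun ω => (tendsto_pi_nhds.1 hlim ω).eventually_const_lt (hpos ω)
  filter_upwards [hnonneg] with t ht
  refine ⟨fun ω => (ht ω).le, ?_⟩
  rw [sum_add_distrib, ← mul_sum, hx, hν.2, mul_zero, zero_add]

end SecondOrder

section Exchangeable

open Polynomial

variable {ι Ω : Type*}

/-- A function of `ι`-indexed tuples is exchangeable if it does not change when the coordinates of
its argument are permuted. -/
def IsExchangeable (m : (ι → Ω) → ℝ) : Prop :=
  ∀ (θ : Equiv.Perm ι) (τ : ι → Ω), m (τ ∘ θ) = m τ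

variable [Fintype ι] [DecidableEq ι] [Fintype Ω]

/-- The mean-field functional `μ ↦ Σ_τ m(τ) Π_i μ(τ_i)` of a deterministic weight `m`. -/
def meanField (m : (ι → Ω) → ℝ) (μ : Ω → ℝ) : ℝ :=
  ∑ τ, m τ * ∏ i, μ (τ i)

/-- The restriction of `meanField m` to the line `t ↦ t x + a 𝟙`, as a polynomial in `t`. -/
noncomputable def meanFieldLine (m : (ι → Ω) → ℝ) (x : Ω → ℝ) (a : ℝ) : ℝ[X] :=
  ∑ τ, C (m τ) * ∏ i, (C (x (τ i)) * X + C a)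

lemma eval_meanFieldLine (m : (ι → Ω) → ℝ) (x : Ω → ℝ) (a t : ℝ) :
    (meanFieldLine m x a).eval t = meanField m fun ω => t * x ω + a := by
  simp [meanFieldLine, meanField, eval_finsetSum, eval_prod, mul_comm t]

namespace IsExchangeable

variable {m : (ι → Ω) → ℝ} {i j : ι}

lemma sum_mul_pair_eq (hm : IsExchangeable m) (x : Ω → ℝ) {i' j' : ι} (hij : i ≠ j)
    (hij' : i' ≠ j') :
    ∑ τ, m τ * (x (τ i') * x (τ j')) = ∑ τ, m τ * (x (τ i) * x (τ j)) := by
  obtain ⟨θ, rfl, rfl⟩ : ∃ θ : Equiv.Perm ι, θ i = i' ∧ θ j = j' :=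
    MulAction.is_two_pretransitive_iff.1 (Equiv.Perm.isMultiplyPretransitive ι 2) hij hij'
  refine Fintype.sum_equiv (θ.symm.arrowCongr (.refl Ω)) _ _ fun τ => ?_
  change _ = m (τ ∘ θ) * (x (τ (θ i)) * x (τ (θ j)))
  rw [hm]

lemma coeff_two_meanFieldLine (hm : IsExchangeable m) (x : Ω → ℝ) (a : ℝ) (hij : i ≠ j) :
    (meanFieldLine m x a).coeff 2 =
      a ^ (Fintype.card ι - 2) * (Fintype.card ι).choose 2 *
        ∑ τ, m τ * (x (τ i) * x (τ j)) := by
  have hpair : ∀ S ∈ powersetCard 2 (univ : Finset ι),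
      ∑ τ, m τ * ∏ l ∈ S, x (τ l) = ∑ τ, m τ * (x (τ i) * x (τ j)) := by
    intro S hS
    obtain ⟨i', j', hij', rfl⟩ := card_eq_two.1 (mem_powersetCard.1 hS).2
    simp_rw [prod_pair hij']
    exact hm.sum_mul_pair_eq x hij hij'
  calc (meanFieldLine m x a).coeff 2
      = a ^ (Fintype.card ι - 2) *
          ∑ S ∈ powersetCard 2 univ, ∑ τ, m τ * ∏ l ∈ S, x (τ l) := by
        simp_rw [meanFieldLine, finsetSum_coeff, coeff_C_mul, coeff_prod_C_mul_X_add_C,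
          mul_left_comm (m _), ← mul_sum, sum_comm (s := powersetCard 2 univ), ← mul_sum]
    _ = _ := by
        rw [sum_congr rfl hpair, sum_const, card_powersetCard, card_univ, nsmul_eq_mul, mul_assoc]

lemma sum_mul_pair_nonpos [Nonempty Ω] (hm : IsExchangeable m)
    (hmax : IsLocalMaxOn (meanField m) (stdSimplex ℝ Ω) fun _ => (Fintype.card Ω : ℝ)⁻¹)
    {x : Ω → ℝ} (hx : ∑ ω, x ω = 0) (hij : i ≠ j) :
    ∑ τ, m τ * (x (τ i) * x (τ j)) ≤ 0 := by
  set u : ℝ := (Fintype.card Ω : ℝ)⁻¹ with hu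
  have hupos : 0 < u := by positivity
  have huniform : (fun _ => u) ∈ stdSimplex ℝ Ω := ⟨fun _ => hupos.le, by simp [hu]⟩
  have hline : IsLocalMax (fun t => (meanFieldLine m x u).eval t) 0 := by
    have := (tendsto_line_nhdsWithin_stdSimplex huniform (fun _ => hupos) hx).eventually hmax
    simpa [IsLocalMax, IsMaxFilter, eval_meanFieldLine] using this
  have hcoeff := coeff_two_nonpos_of_isLocalMax hline
  rw [hm.coeff_two_meanFieldLine x u hij] at hcoeff
  have hcard : 2 ≤ Fintype.card ι := Fintype.one_lt_card_iff.2 ⟨i, j, hij⟩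
  have hchoose : (0 : ℝ) < (Fintype.card ι).choose 2 := mod_cast Nat.choose_pos hcard
  exact nonpos_of_mul_nonpos_right hcoeff (by positivity)

end IsExchangeable

end Exchangeable

section LinearAlgebra

open scoped Kronecker

lemma kronecker_mulVec_mul {R l m n p : Type*} [CommSemiring R] [Fintype m] [Fintype p]
    (A : Matrix l m R) (B : Matrix n p R) (x : m → R) (y : p → R) :
    (A ⊗ₖ B) *ᵥ (fun r => x r.1 * y r.2) = fun s => (A *ᵥ x) s.1 * (B *ᵥ y) s.2 := by
  ext s
  simp only [mulVec, dotProduct, kroneckerMap_apply, Fintype.sum_prod_type, sum_mul_sum,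
    mul_mul_mul_comm]

lemma comp_fst_dotProduct_comp_fst {R m n : Type*} [Semiring R] [Fintype m] [Fintype n]
    (x y : m → R) :
    ((fun p : m × n => x p.1) ⬝ᵥ fun p => y p.1) = Fintype.card n * (x ⬝ᵥ y) := by
  simp [dotProduct, Fintype.sum_prod_type, mul_sum]

lemma comp_snd_dotProduct_comp_snd {R m n : Type*} [Semiring R] [Fintype m] [Fintype n]
    (x y : n → R) :
    ((fun p : m × n => x p.2) ⬝ᵥ fun p => y p.2) = Fintype.card m * (x ⬝ᵥ y) := by
  simp [dotProduct, Fintype.sum_prod_type]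

lemma mulVec_dotProduct_of_isSymm {R n : Type*} [CommSemiring R] [Fintype n] {A : Matrix n n R}
    (hA : A.IsSymm) (z y : n → R) : A *ᵥ z ⬝ᵥ y = z ⬝ᵥ A *ᵥ y := by
  rw [dotProduct_mulVec, ← mulVec_transpose, hA.eq]

lemma integral_mulVec {𝕜 S m n : Type*} [RCLike 𝕜] [MeasurableSpace S] [Fintype n]
    {μ : Measure S} {A : S → Matrix m n 𝕜} (hA : ∀ i j, Integrable (fun s => A s i j) μ) (v : n → 𝕜)
    (i : m) : ∫ s, (A s *ᵥ v) i ∂μ = (of (fun i j => ∫ s, A s i j ∂μ) *ᵥ v) i := by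
  simp only [mulVec, dotProduct, of_apply]
  rw [integral_finsetSum _ fun j _ => (hA i j).mul_const _]
  simp only [integral_mul_const]

variable {Ω : Type*} [Fintype Ω] {A : Matrix (Ω × Ω) (Ω × Ω) ℝ}

lemma mulVec_mem_Ecal (hA : A.IsSymm) {T : (Ω → ℝ) → Ω → ℝ}
    (hfst : ∀ x : Ω → ℝ, A *ᵥ (fun p => x p.1) = fun p => T x p.1)
    (hsnd : ∀ x : Ω → ℝ, A *ᵥ (fun p => x p.2) = fun p => T x p.2)
    {z : Ω × Ω → ℝ} (hz : z ∈ Ecal Ω) : A *ᵥ z ∈ Ecal Ω := by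
  intro y
  rw [mulVec_dotProduct_of_isSymm hA, mulVec_dotProduct_of_isSymm hA, hfst, hsnd]
  exact hz (T y)

lemma mulVec_mem_Ecal' (hA : A.IsSymm) (hone : A *ᵥ (fun _ => 1) = fun _ => 1)
    {z : Ω × Ω → ℝ} (hz : z ∈ Ecal' Ω) : A *ᵥ z ∈ Ecal' Ω := by
  change _ ⬝ᵥ _ = _
  rw [mulVec_dotProduct_of_isSymm hA, hone]
  exact hz

end LinearAlgebra

section WeightFunctions

open scoped Kronecker

variable {Ω : Type*} {k : ℕ} {P : Measure (WF Ω k)}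

/-- The averaged weight function `τ ↦ E[ψ(τ)]`. -/
noncomputable def meanWeight (P : Measure (WF Ω k)) : WF Ω k :=
  fun τ => ∫ ψ, ψ τ ∂P

lemma memLp_apply_of_ae_mem_Icc [IsFiniteMeasure P] {a b : ℝ}
    (hval : ∀ᵐ ψ ∂P, ∀ τ, ψ τ ∈ Set.Icc a b) (p : ENNReal) (τ : Fin k → Ω) :
    MemLp (fun ψ : WF Ω k => ψ τ) p P :=
  memLp_of_bounded (hval.mono fun _ h => h τ) (measurable_pi_apply τ).aestronglyMeasurable p

variable [Fintype Ω]

lemma phiFun_eq_meanField_meanWeight : phiFun P = meanField (meanWeight P) :=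
  rfl

namespace SYMperm

lemma integral_comp (hP : SYMperm P) {E : Type*} [NormedAddCommGroup E] [NormedSpace ℝ E]
    (θ : Equiv.Perm (Fin k)) (f : WF Ω k → E) :
    ∫ ψ, f (fun σ => ψ (σ ∘ θ)) ∂P = ∫ ψ, f ψ ∂P := by
  let e : WF Ω k ≃ᵐ WF Ω k :=
    MeasurableEquiv.arrowCongr' (θ.arrowCongr (.refl Ω)) (.refl ℝ)
  have he : MeasurePreserving e P P := ⟨e.measurable, hP θ⟩
  exact he.integral_comp' f

lemma isExchangeable_meanWeight (hP : SYMperm P) : IsExchangeable (meanWeight P) :=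
  fun θ τ => hP.integral_comp θ fun ψ => ψ τ

end SYMperm

variable [DecidableEq Ω] {ξ : ℝ} {ψ : WF Ω k}

lemma pos_of_marginal_eq (hψ : ∀ τ, 0 < ψ τ) (i : Fin k) (ω : Ω)
    (hmarg : (∑ τ : Fin k → Ω, if τ i = ω then ψ τ else 0) =
      (Fintype.card Ω : ℝ) ^ (k - 1) * ξ) : 0 < ξ := by
  have hsum : 0 < ∑ τ : Fin k → Ω, if τ i = ω then ψ τ else 0 := by
    rw [← sum_filter]
    exact sum_pos (fun τ _ => hψ τ) ⟨fun _ => ω, by simp⟩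
  rw [hmarg] at hsum
  exact pos_of_mul_pos_right hsum (by positivity)

variable [NeZero k]

lemma PhiMat_mulVec_apply (ξ : ℝ) (ψ : WF Ω k) (x : Ω → ℝ) (ω : Ω) :
    (PhiMat ξ ψ *ᵥ x) ω = ((Fintype.card Ω : ℝ) ^ (k - 1) * ξ)⁻¹ *
      ∑ τ : Fin k → Ω, if τ 0 = ω then ψ τ * x (τ 1) else 0 := by
  simp only [mulVec, dotProduct, PhiMat, mul_assoc, sum_mul, ← mul_sum]
  rw [sum_comm]
  simp [ite_and]

lemma PhiMat_mulVec_one (hξ : ξ ≠ 0)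
    (hmarg : ∀ ω, (∑ τ : Fin k → Ω, if τ 0 = ω then ψ τ else 0) =
      (Fintype.card Ω : ℝ) ^ (k - 1) * ξ) : PhiMat ξ ψ *ᵥ 1 = 1 := by
  ext ω
  simp only [PhiMat_mulVec_apply, Pi.one_apply, mul_one, hmarg]
  have : Nonempty Ω := ⟨ω⟩
  exact inv_mul_cancel₀ (by positivity)

lemma PhiMat_mulVec_dotProduct (ξ : ℝ) (ψ : WF Ω k) (x y : Ω → ℝ) :
    PhiMat ξ ψ *ᵥ x ⬝ᵥ y = ((Fintype.card Ω : ℝ) ^ (k - 1) * ξ)⁻¹ *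
      ∑ τ, ψ τ * (y (τ 0) * x (τ 1)) := by
  simp only [dotProduct, PhiMat_mulVec_apply, mul_assoc, ← mul_sum, sum_mul]
  rw [sum_comm]
  simp [mul_comm, mul_left_comm]

lemma PhiMat_comp_swap (ξ : ℝ) (ψ : WF Ω k) :
    PhiMat ξ (fun σ => ψ (σ ∘ Equiv.swap 0 1)) = (PhiMat ξ ψ)ᵀ := by
  ext ω ω'
  simp only [PhiMat, transpose_apply]
  congr 1
  refine Fintype.sum_equiv ((Equiv.swap 0 1).arrowCongr (.refl Ω)) _ _ fun τ => ?_
  have hcomp : (Equiv.swap (0 : Fin k) 1).arrowCongr (.refl Ω) τ = τ ∘ Equiv.swap 0 1 := rfl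
  simp [hcomp, and_comm]

lemma XiMat_isSymm (ξ : ℝ) (hP : SYMperm P) : (XiMat ξ P).IsSymm := by
  ext p r
  have hswap := hP.integral_comp (Equiv.swap 0 1) fun ψ =>
    PhiMat ξ ψ p.1 r.1 * PhiMat ξ ψ p.2 r.2
  simp only [PhiMat_comp_swap, transpose_apply] at hswap
  exact hswap

lemma memLp_PhiMat_apply {p : ENNReal} (hψ : ∀ τ, MemLp (fun ψ : WF Ω k => ψ τ) p P)
    (ξ : ℝ) (ω ω' : Ω) : MemLp (fun ψ => PhiMat ξ ψ ω ω') p P := by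
  have hterm (τ : Fin k → Ω) :
      MemLp (fun ψ : WF Ω k => if τ 0 = ω ∧ τ 1 = ω' then ψ τ else 0) p P := by
    split_ifs
    exacts [hψ τ, MemLp.zero']
  exact (memLp_finsetSum univ fun τ _ => hterm τ).const_mul _

lemma PhiAvg_eq_PhiMat_meanWeight (ξ : ℝ) (hψ : ∀ τ, Integrable (fun ψ : WF Ω k => ψ τ) P) :
    PhiAvg ξ P = PhiMat ξ (meanWeight P) := by
  ext ω ω'
  simp only [PhiAvg, PhiMat, ← sum_filter, meanWeight]
  rw [integral_const_mul, integral_finsetSum _ fun τ _ => hψ τ]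

lemma PhiAvg_mulVec_dotProduct_nonpos [Nonempty Ω] (hξ : 0 ≤ ξ) (hk : 2 ≤ k)
    (hψ : ∀ τ, Integrable (fun ψ : WF Ω k => ψ τ) P) (hperm : SYMperm P)
    (hmax : IsLocalMaxOn (phiFun P) (stdSimplex ℝ Ω) fun _ => (Fintype.card Ω : ℝ)⁻¹)
    {x : Ω → ℝ} (hx : ∑ ω, x ω = 0) : PhiAvg ξ P *ᵥ x ⬝ᵥ x ≤ 0 := by
  have h01 : (0 : Fin k) ≠ 1 := fun h => (one_lt_two.trans_le hk).ne' (Fin.zero_eq_one_iff.1 h)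
  rw [phiFun_eq_meanField_meanWeight] at hmax
  rw [PhiAvg_eq_PhiMat_meanWeight ξ hψ, PhiMat_mulVec_dotProduct]
  exact mul_nonpos_of_nonneg_of_nonpos (by positivity)
    (hperm.isExchangeable_meanWeight.sum_mul_pair_nonpos hmax hx h01)

lemma XiMat_mulVec_mul (hψ : ∀ τ, MemLp (fun ψ : WF Ω k => ψ τ) 2 P) (ξ : ℝ) (x y : Ω → ℝ) :
    XiMat ξ P *ᵥ (fun p => x p.1 * y p.2) =
      fun p => ∫ ψ, (PhiMat ξ ψ *ᵥ x) p.1 * (PhiMat ξ ψ *ᵥ y) p.2 ∂P := by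
  ext p
  have hint (p r : Ω × Ω) : Integrable (fun ψ => (PhiMat ξ ψ ⊗ₖ PhiMat ξ ψ) p r) P :=
    (memLp_PhiMat_apply hψ ξ p.1 r.1).integrable_mul (memLp_PhiMat_apply hψ ξ p.2 r.2)
  have := integral_mulVec hint (fun p => x p.1 * y p.2) p
  simp only [kronecker_mulVec_mul] at this
  exact this.symm

lemma integral_PhiMat_mulVec (hψ : ∀ τ, Integrable (fun ψ : WF Ω k => ψ τ) P) (ξ : ℝ)
    (x : Ω → ℝ) (ω : Ω) : ∫ ψ, (PhiMat ξ ψ *ᵥ x) ω ∂P = (PhiAvg ξ P *ᵥ x) ω := by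
  simp only [← memLp_one_iff_integrable] at hψ
  exact integral_mulVec
    (fun ω ω' => memLp_one_iff_integrable.1 (memLp_PhiMat_apply hψ ξ ω ω')) x ω

lemma XiMat_mulVec_one [IsProbabilityMeasure P] (hψ : ∀ τ, MemLp (fun ψ : WF Ω k => ψ τ) 2 P)
    (hone : ∀ᵐ ψ ∂P, PhiMat ξ ψ *ᵥ 1 = 1) : XiMat ξ P *ᵥ (fun _ => 1) = fun _ => 1 := by
  have hmul := XiMat_mulVec_mul hψ ξ 1 1
  simp only [Pi.one_apply, mul_one] at hmul
  rw [hmul]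
  ext p
  calc ∫ ψ, (PhiMat ξ ψ *ᵥ 1) p.1 * (PhiMat ξ ψ *ᵥ 1) p.2 ∂P = ∫ _, 1 ∂P :=
        integral_congr_ae (hone.mono fun ψ h => by simp [h])
    _ = 1 := by simp

lemma XiMat_mulVec_comp_fst [IsFiniteMeasure P] (hψ : ∀ τ, MemLp (fun ψ : WF Ω k => ψ τ) 2 P)
    (hone : ∀ᵐ ψ ∂P, PhiMat ξ ψ *ᵥ 1 = 1) (x : Ω → ℝ) :
    XiMat ξ P *ᵥ (fun p => x p.1) = fun p => (PhiAvg ξ P *ᵥ x) p.1 := by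
  have hmul := XiMat_mulVec_mul hψ ξ x 1
  simp only [Pi.one_apply, mul_one] at hmul
  rw [hmul]
  ext p
  rw [← integral_PhiMat_mulVec fun τ => (hψ τ).integrable one_le_two]
  exact integral_congr_ae (hone.mono fun ψ h => by simp [h])

lemma XiMat_mulVec_comp_snd [IsFiniteMeasure P] (hψ : ∀ τ, MemLp (fun ψ : WF Ω k => ψ τ) 2 P)
    (hone : ∀ᵐ ψ ∂P, PhiMat ξ ψ *ᵥ 1 = 1) (x : Ω → ℝ) :
    XiMat ξ P *ᵥ (fun p => x p.2) = fun p => (PhiAvg ξ P *ᵥ x) p.2 := by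
  have hmul := XiMat_mulVec_mul hψ ξ 1 x
  simp only [Pi.one_apply, one_mul] at hmul
  rw [hmul]
  ext p
  rw [← integral_PhiMat_mulVec fun τ => (hψ τ).integrable one_le_two]
  exact integral_congr_ae (hone.mono fun ψ h => by simp [h])

end WeightFunctions

theorem stmt1_general {Ω : Type*} [Fintype Ω] [DecidableEq Ω] [Nonempty Ω]
    {k : ℕ} [NeZero k] (hk : 2 ≤ k) (P : Measure (WF Ω k)) [IsProbabilityMeasure P]
    (hψ : ∀ τ, MemLp (fun ψ : WF Ω k => ψ τ) 2 P) (hξ : 0 < xiP P)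
    (hmarg : ∀ᵐ ψ ∂P, ∀ ω, (∑ τ : Fin k → Ω, if τ 0 = ω then ψ τ else 0) =
      (Fintype.card Ω : ℝ) ^ (k - 1) * xiP P)
    (hperm : SYMperm P)
    (hmax : IsLocalMaxOn (phiFun P) (stdSimplex ℝ Ω) fun _ => (Fintype.card Ω : ℝ)⁻¹) :
    (XiMat (xiP P) P).IsSymm ∧
    ((XiMat (xiP P) P).mulVec (fun _ => 1) = fun _ => 1) ∧
    (∀ x : Ω → ℝ,
      ((XiMat (xiP P) P).mulVec (fun p => x p.1) =
        fun p => (PhiAvg (xiP P) P).mulVec x p.1) ∧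
      ((XiMat (xiP P) P).mulVec (fun p => x p.2) =
        fun p => (PhiAvg (xiP P) P).mulVec x p.2)) ∧
    (∀ x : Ω → ℝ, (∑ ω, x ω = 0) →
      ((XiMat (xiP P) P).mulVec (fun p => x p.1) ⬝ᵥ fun p => x p.1) ≤ 0 ∧
      ((XiMat (xiP P) P).mulVec (fun p => x p.2) ⬝ᵥ fun p => x p.2) ≤ 0) ∧
    (∀ z ∈ Ecal Ω, (XiMat (xiP P) P).mulVec z ∈ Ecal Ω) ∧
    (∀ z ∈ Ecal' Ω, (XiMat (xiP P) P).mulVec z ∈ Ecal' Ω) := by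
  have hone : ∀ᵐ ψ ∂P, PhiMat (xiP P) ψ *ᵥ 1 = 1 :=
    hmarg.mono fun ψ => PhiMat_mulVec_one hξ.ne'
  have hsymm := XiMat_isSymm (xiP P) hperm
  have hΞone := XiMat_mulVec_one hψ hone
  have hfst := XiMat_mulVec_comp_fst hψ hone
  have hsnd := XiMat_mulVec_comp_snd hψ hone
  have hquad (x : Ω → ℝ) (hx : ∑ ω, x ω = 0) :
      (Fintype.card Ω : ℝ) * (PhiAvg (xiP P) P *ᵥ x ⬝ᵥ x) ≤ 0 :=
    mul_nonpos_of_nonneg_of_nonpos (Nat.cast_nonneg _) <| PhiAvg_mulVec_dotProduct_nonpos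
      hξ.le hk (fun τ => (hψ τ).integrable one_le_two) hperm hmax hx
  refine ⟨hsymm, hΞone, fun x => ⟨hfst x, hsnd x⟩, fun x hx => ⟨?_, ?_⟩,
    fun z => mulVec_mem_Ecal hsymm hfst hsnd, fun z => mulVec_mem_Ecal' hsymm hΞone⟩
  · rw [hfst, comp_fst_dotProduct_comp_fst]
    exact hquad x hx
  · rw [hsnd, comp_snd_dotProduct_comp_snd]
    exact hquad x hx

/-- Lemma "Lemma_Xi": under SYM and BAL, `Ξ` is self-adjoint,
`Ξ(𝟙⊗𝟙) = 𝟙⊗𝟙`, `Ξ(x⊗𝟙) = (Φx)⊗𝟙`, `Ξ(𝟙⊗x) = 𝟙⊗(Φx)`, the quadratic form of `Ξ` is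
nonpositive on vectors `x⊗𝟙` and `𝟙⊗x` with `x ⊥ 𝟙`, and `Ξ` leaves `ℰ` and `ℰ'` invariant. -/
theorem stmt1 {Ω : Type*} [Fintype Ω] [DecidableEq Ω] [Nonempty Ω]
    {k : ℕ} [NeZero k] (hk : 2 ≤ k)
    (Ψ : Set (WF Ω k)) (P : Measure (WF Ω k)) [IsProbabilityMeasure P]
    (hΨval : ∀ ψ ∈ Ψ, ∀ τ, ψ τ ∈ Set.Ioo (0 : ℝ) 2)
    (hPΨ : ∀ᵐ ψ ∂P, ψ ∈ Ψ)
    (hSYM : SYMpt Ψ (xiP P) ∧ SYMperm P) (hBAL : BAL P) :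
    (XiMat (xiP P) P).IsSymm ∧
    ((XiMat (xiP P) P).mulVec (fun _ => 1) = fun _ => 1) ∧
    (∀ x : Ω → ℝ,
      ((XiMat (xiP P) P).mulVec (fun p => x p.1) =
        fun p => (PhiAvg (xiP P) P).mulVec x p.1) ∧
      ((XiMat (xiP P) P).mulVec (fun p => x p.2) =
        fun p => (PhiAvg (xiP P) P).mulVec x p.2)) ∧
    (∀ x : Ω → ℝ, (∑ ω, x ω = 0) →
      ((XiMat (xiP P) P).mulVec (fun p => x p.1) ⬝ᵥ fun p => x p.1) ≤ 0 ∧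
      ((XiMat (xiP P) P).mulVec (fun p => x p.2) ⬝ᵥ fun p => x p.2) ≤ 0) ∧
    (∀ z ∈ Ecal Ω, (XiMat (xiP P) P).mulVec z ∈ Ecal Ω) ∧
    (∀ z ∈ Ecal' Ω, (XiMat (xiP P) P).mulVec z ∈ Ecal' Ω) := by
  obtain ⟨ψ, hψ⟩ := hPΨ.exists
  have hξ : 0 < xiP P :=
    pos_of_marginal_eq (fun τ => (hΨval ψ hψ τ).1) 0 (Classical.arbitrary Ω) (hSYM.1 ψ hψ 0 _)
  exact stmt1_general hk P
    (memLp_apply_of_ae_mem_Icc (hPΨ.mono fun ψ hψ τ => Set.Ioo_subset_Icc_self (hΨval ψ hψ τ)) 2)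
    hξ (hPΨ.mono fun ψ hψ => hSYM.1 ψ hψ 0) hSYM.2 (IsMaxOn.localize hBAL.2)
end

section
/- Assume condition SYM holds. Then for every integer ℓ ≥ 1 and all weight functions ψ_1, …, ψ_ℓ ∈ Ψ: Tr(Φ_{ψ_1}·Φ_{ψ_2}·⋯·Φ_{ψ_ℓ}) ≥ q^{1−k}·ξ^{−1}·max_{1≤j≤ℓ} min_{τ∈Ω^k} ψ_j(τ). -/
open MeasureTheory Matrix Finset

/-!
Under SYM every `Φ_ψ` is row-stochastic. For any chosen `j`, cyclicity of the trace turns the trace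
of the product into `Tr (Φ_{ψ_j} * D)` with `D` row-stochastic. If all entries of `Φ_{ψ_j}` are at
least `a`, this is at least `a` times the sum of all entries of `D`, that is, `q * a`. Each entry of
`Φ_{ψ_j}` sums `q^{k-2}` values of `ψ_j`, so `a = (q * ξ)⁻¹ * min ψ_j` is admissible. The resulting
bound `ξ⁻¹ * min ψ_j` is attained by constant weight functions and is sharper than the bound in the
paper by the factor `q^{k-1}`.
-/

section RowStochastic

variable {R n : Type*} [Fintype n] [DecidableEq n] [PartialOrder R]

theorem card_nsmul_le_trace_mul_of_mem_rowStochastic [Semiring R] [IsOrderedRing R]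
    {B D : Matrix n n R} {a : R} (hB : ∀ i j, a ≤ B i j) (hD : D ∈ rowStochastic R n) :
    Fintype.card n • a ≤ (B * D).trace :=
  calc Fintype.card n • a = ∑ j, ∑ i, a * D j i := by
        simp [← Finset.mul_sum, sum_row_of_mem_rowStochastic hD]
    _ ≤ ∑ j, ∑ i, B i j * D j i := by
        gcongr with j _ i _
        · exact nonneg_of_mem_rowStochastic hD
        · exact hB i j
    _ = (B * D).trace := by
        rw [Finset.sum_comm]
        simp only [Matrix.trace, Matrix.diag_apply, Matrix.mul_apply]

theorem card_nsmul_le_trace_list_prod_of_mem_rowStochastic [CommSemiring R] [IsOrderedRing R]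
    {L : List (Matrix n n R)} (hL : ∀ M ∈ L, M ∈ rowStochastic R n)
    {B : Matrix n n R} (hBL : B ∈ L) {a : R} (hB : ∀ i j, a ≤ B i j) :
    Fintype.card n • a ≤ L.prod.trace := by
  obtain ⟨s, t, rfl⟩ := List.append_of_mem hBL
  have hs : s.prod ∈ rowStochastic R n := list_prod_mem fun M hM => hL M (by simp [hM])
  have ht : t.prod ∈ rowStochastic R n := list_prod_mem fun M hM => hL M (by simp [hM])
  rw [List.prod_append, List.prod_cons, Matrix.trace_mul_comm, Matrix.mul_assoc]
  exact card_nsmul_le_trace_mul_of_mem_rowStochastic hB (mul_mem ht hs)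

end RowStochastic

theorem card_filter_forall_mem_eq {ι α : Type*} [Fintype ι] [DecidableEq ι] [Fintype α]
    [DecidableEq α] (s : Finset ι) (f : ι → α) :
    #{τ : ι → α | ∀ i ∈ s, τ i = f i} = Fintype.card α ^ (Fintype.card ι - #s) := by
  have hpi : ({τ : ι → α | ∀ i ∈ s, τ i = f i} : Finset (ι → α)) =
      Fintype.piFinset fun i => if i ∈ s then {f i} else univ := by
    ext τ
    simp only [mem_filter, mem_univ, true_and, Fintype.mem_piFinset]
    refine forall_congr' fun i => ?_
    by_cases hi : i ∈ s <;> simp [hi]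
  simp only [hpi, Fintype.card_piFinset, apply_ite Finset.card, card_singleton, Finset.card_univ,
    Finset.prod_ite, Finset.prod_const, one_pow, one_mul]
  rw [← Finset.card_compl, Finset.compl_eq_univ_sdiff, Finset.filter_notMem_eq_sdiff]

theorem card_filter_eq_and_eq {ι α : Type*} [Fintype ι] [DecidableEq ι] [Fintype α]
    [DecidableEq α] {i j : ι} (hij : i ≠ j) (a b : α) :
    #{τ : ι → α | τ i = a ∧ τ j = b} = Fintype.card α ^ (Fintype.card ι - 2) := by
  simpa [hij.symm, Finset.card_pair hij] using
    card_filter_forall_mem_eq {i, j} fun l => if l = i then a else b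

section WeightFunction

variable {Ω : Type*} [Fintype Ω] [DecidableEq Ω] {k : ℕ} {ξ : ℝ} {ψ : WF Ω k}

/-- The (unnormalised) `i`-th marginal `ω ↦ Σ_τ 1{τ_i=ω} ψ(τ)` of a weight function, the quantity
that condition SYM prescribes. -/
def marginal (ψ : WF Ω k) (i : Fin k) (ω : Ω) : ℝ :=
  ∑ τ : Fin k → Ω, if τ i = ω then ψ τ else 0

theorem marginal_pos (hψ : ∀ τ, 0 < ψ τ) (i : Fin k) (ω : Ω) : 0 < marginal ψ i ω := by
  rw [marginal, ← Finset.sum_filter]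
  exact Finset.sum_pos (fun τ _ => hψ τ) ⟨fun _ => ω, by simp⟩

variable [NeZero k]

theorem sum_PhiMat_apply (ξ : ℝ) (ψ : WF Ω k) (ω : Ω) :
    ∑ ω', PhiMat ξ ψ ω ω' = ((Fintype.card Ω : ℝ) ^ (k - 1) * ξ)⁻¹ * marginal ψ 0 ω := by
  simp only [PhiMat, marginal, ← Finset.mul_sum]
  rw [Finset.sum_comm]
  simp [ite_and]

theorem PhiMat_nonneg (hξ : 0 ≤ ξ) (hψ : ∀ τ, 0 ≤ ψ τ) (ω ω' : Ω) : 0 ≤ PhiMat ξ ψ ω ω' := by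
  rw [PhiMat, ← Finset.sum_filter]
  exact mul_nonneg (by positivity) (Finset.sum_nonneg fun τ _ => hψ τ)

theorem PhiMat_mem_rowStochastic (hξ : 0 < ξ) (hψ : ∀ τ, 0 ≤ ψ τ)
    (hmarg : ∀ ω, marginal ψ 0 ω = (Fintype.card Ω : ℝ) ^ (k - 1) * ξ) :
    PhiMat ξ ψ ∈ rowStochastic ℝ Ω := by
  refine mem_rowStochastic_iff_sum.2 ⟨PhiMat_nonneg hξ.le hψ, fun ω => ?_⟩
  have : Nonempty Ω := ⟨ω⟩
  rw [sum_PhiMat_apply, hmarg, inv_mul_cancel₀ (by positivity)]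

theorem le_PhiMat_apply (hk : 2 ≤ k) (hξ : 0 ≤ ξ) {m : ℝ} (hm : ∀ τ, m ≤ ψ τ)
    (ω ω' : Ω) : (Fintype.card Ω * ξ)⁻¹ * m ≤ PhiMat ξ ψ ω ω' := by
  have : Nonempty Ω := ⟨ω⟩
  obtain ⟨l, rfl⟩ := Nat.exists_eq_add_of_le' hk
  have hcard : #{τ : Fin (l + 2) → Ω | τ 0 = ω ∧ τ 1 = ω'} = Fintype.card Ω ^ l := by
    simpa using card_filter_eq_and_eq (zero_ne_one' (Fin (l + 2))) ω ω'
  have hsum : (Fintype.card Ω : ℝ) ^ l * m ≤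
      ∑ τ : Fin (l + 2) → Ω with τ 0 = ω ∧ τ 1 = ω', ψ τ := by
    simpa [hcard] using Finset.card_nsmul_le_sum
      {τ : Fin (l + 2) → Ω | τ 0 = ω ∧ τ 1 = ω'} ψ m fun τ _ => hm τ
  calc (Fintype.card Ω * ξ)⁻¹ * m
      = ((Fintype.card Ω : ℝ) ^ (l + 1) * ξ)⁻¹ * ((Fintype.card Ω : ℝ) ^ l * m) := by
        rw [pow_succ]
        field_simp
    _ ≤ PhiMat ξ ψ ω ω' := by
        rw [PhiMat, ← Finset.sum_filter]
        exact mul_le_mul_of_nonneg_left hsum (by positivity)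

end WeightFunction

theorem stmt13_general {Ω : Type*} [Fintype Ω] [DecidableEq Ω] [Nonempty Ω]
    {k : ℕ} [NeZero k] (hk : 2 ≤ k) {ξ : ℝ} (hξ : 0 < ξ)
    {ℓ : ℕ} (hℓ : 1 ≤ ℓ) (ψs : Fin ℓ → WF Ω k) (hψs : ∀ j τ, 0 ≤ ψs j τ)
    (hmarg : ∀ j ω, marginal (ψs j) 0 ω = (Fintype.card Ω : ℝ) ^ (k - 1) * ξ) :
    ξ⁻¹ * Finset.univ.sup' ⟨⟨0, hℓ⟩, Finset.mem_univ _⟩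
        (fun j : Fin ℓ => Finset.univ.inf' Finset.univ_nonempty
          (fun τ : Fin k → Ω => ψs j τ)) ≤
      Matrix.trace (List.ofFn fun i => PhiMat ξ (ψs i)).prod := by
  obtain ⟨j, -, hj⟩ := Finset.exists_mem_eq_sup' (s := Finset.univ) ⟨⟨0, hℓ⟩, Finset.mem_univ _⟩
    (fun j : Fin ℓ => Finset.univ.inf' Finset.univ_nonempty (fun τ : Fin k → Ω => ψs j τ))
  rw [hj]
  set m := Finset.univ.inf' Finset.univ_nonempty (fun τ : Fin k → Ω => ψs j τ)
  have hstoch : ∀ M ∈ List.ofFn fun i => PhiMat ξ (ψs i), M ∈ rowStochastic ℝ Ω :=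
    List.forall_mem_ofFn_iff.2 fun i => PhiMat_mem_rowStochastic hξ (hψs i) (hmarg i)
  have hentry : ∀ ω ω', (Fintype.card Ω * ξ)⁻¹ * m ≤ PhiMat ξ (ψs j) ω ω' :=
    le_PhiMat_apply hk hξ.le fun τ => Finset.inf'_le _ (Finset.mem_univ τ)
  calc ξ⁻¹ * m = Fintype.card Ω • ((Fintype.card Ω * ξ)⁻¹ * m) := by
        rw [nsmul_eq_mul]
        field_simp
    _ ≤ Matrix.trace (List.ofFn fun i => PhiMat ξ (ψs i)).prod :=
        card_nsmul_le_trace_list_prod_of_mem_rowStochastic hstoch (List.mem_ofFn.2 ⟨j, rfl⟩) hentry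

/-- trace lower bound, eq. "eq_cyclic_permutations": under SYM, for any
weight functions `ψ_1,…,ψ_ℓ ∈ Ψ`,
`Tr(Φ_{ψ_1}⋯Φ_{ψ_ℓ}) ≥ q^{1-k}·ξ^{-1}·max_j min_τ ψ_j(τ)`. -/
theorem stmt13 {Ω : Type*} [Fintype Ω] [DecidableEq Ω] [Nonempty Ω]
    {k : ℕ} [NeZero k] (hk : 2 ≤ k)
    (Ψ : Set (WF Ω k)) (P : Measure (WF Ω k)) [IsProbabilityMeasure P]
    (hΨval : ∀ ψ ∈ Ψ, ∀ τ, ψ τ ∈ Set.Ioo (0 : ℝ) 2)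
    (hPΨ : ∀ᵐ ψ ∂P, ψ ∈ Ψ)
    (hSYM : SYMpt Ψ (xiP P) ∧ SYMperm P)
    {ℓ : ℕ} (hℓ : 1 ≤ ℓ) (ψs : Fin ℓ → WF Ω k) (hψs : ∀ j, ψs j ∈ Ψ) :
    ((Fintype.card Ω : ℝ) ^ (k - 1) * xiP P)⁻¹ *
        Finset.univ.sup' ⟨⟨0, hℓ⟩, Finset.mem_univ _⟩
          (fun j : Fin ℓ => Finset.univ.inf' Finset.univ_nonempty
            (fun τ : Fin k → Ω => ψs j τ)) ≤
      Matrix.trace (List.ofFn fun i => PhiMat (xiP P) (ψs i)).prod := by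
  have hpos : ∀ j τ, 0 < ψs j τ := fun j τ => (hΨval _ (hψs j) τ).1
  have hmarg : ∀ j ω, marginal (ψs j) 0 ω = (Fintype.card Ω : ℝ) ^ (k - 1) * xiP P :=
    fun j => hSYM.1 (ψs j) (hψs j) 0
  have hξ : 0 < xiP P := pos_of_mul_pos_right
    (hmarg ⟨0, hℓ⟩ (Classical.arbitrary Ω) ▸ marginal_pos (hpos _) 0 _) (by positivity)
  refine le_trans ?_ (stmt13_general hk hξ hℓ ψs (fun j τ => (hpos j τ).le) hmarg)
  gcongr
  · exact Finset.le_sup'_of_le _ (Finset.mem_univ ⟨0, hℓ⟩)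
      (Finset.le_inf' _ _ fun τ _ => (hpos _ τ).le)
  · exact le_mul_of_one_le_left hξ.le (one_le_pow₀ (by exact_mod_cast Fintype.card_pos))
end
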